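/- (Proposition 5: univariate queries via message passing.) For every vertex i ∈ V and every Lebesgue-measurable set Q ⊆ ℝ, the Lebesgue volume of Δ ∩ {x ∈ ℝ^V : x_i ∈ Q} equals ∫_ℝ 1[t ∈ Q]·1[t ∈ D_i]·b_i(t) dt. -/

import Mathlib

open MeasureTheory
open scoped ENNReal

noncomputable section

/-- The model region `Δ ⊆ ℝ^V` : the set of points `x` with `x_i ∈ D_i` for every vertex
`i` and `(x_i, x_j) ∈ D_{ij}` for every edge `{i,j}`. -/
def mpModel {V : Type*} (G : SimpleGraph V) (D : V → Set ℝ) (Dij : V → V → Set (ℝ × ℝ)) :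
    Set (V → ℝ) :=
  {x | (∀ i, x i ∈ D i) ∧ ∀ i j, G.Adj i j → (x i, x j) ∈ Dij i j}

/-!
Weight an assignment by the product of its vertex and edge potentials; the model region is the case
where all potentials are indicators. If `T` is a subtree, integrating out the variables outside `T`
leaves the density on `T` times the messages crossing into `T`. To see this, let a subtree
grow one vertex `l` at a time from `T` to the whole tree: acyclicity gives `l` a unique neighbor `p`
in the subtree, so the only new edge is `l p`, and by Tonelli integrating out `x_l` is exactly the
recursion defining the message from `l` to `p`. For `T = {i}` this is the belief at `i`.
-/

section Graph

variable {V : Type*} {G : SimpleGraph V} {l p q : V}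

theorem eq_of_adj_of_preconnected_induce (hG : G.IsAcyclic) {T : Set V}
    (hT : (G.induce T).Preconnected) (hl : l ∉ T) (hp : p ∈ T) (hq : q ∈ T)
    (hlp : G.Adj l p) (hlq : G.Adj l q) : q = p := by
  have bridge : G.IsBridge s(l, p) := SimpleGraph.isAcyclic_iff_forall_adj_isBridge.1 hG hlp
  obtain ⟨w⟩ := hT ⟨q, hq⟩ ⟨p, hp⟩
  have hw : l ∉ (w.map (SimpleGraph.Embedding.induce T).toHom).support := by
    rw [SimpleGraph.Walk.support_map, List.mem_map]
    rintro ⟨u, -, hu⟩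
    exact hl (hu ▸ u.2)
  let w' : G.Walk q p := w.map (SimpleGraph.Embedding.induce T).toHom
  have mem_edges : s(l, p) ∈ (SimpleGraph.Walk.cons hlq w').edges :=
    SimpleGraph.isBridge_iff_forall_walk_mem_edges.1 bridge _
  rw [SimpleGraph.Walk.edges_cons, List.mem_cons] at mem_edges
  rcases mem_edges with h | h
  · exact (Sym2.congr_right.1 h).symm
  · exact absurd (w'.fst_mem_support_of_mem_edges h) hw

theorem connected_induce_insert {T : Set V} (hT : (G.induce T).Preconnected) (hp : p ∈ T)
    (hlp : G.Adj l p) : (G.induce (insert l T)).Connected := by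
  have h := SimpleGraph.induce_union_connected
    (SimpleGraph.induce_pair_connected_of_adj hlp).preconnected hT ⟨p, by simp, hp⟩
  rwa [Set.insert_union, Set.singleton_union, Set.insert_eq_of_mem hp] at h

theorem connected_induce_singleton (v : V) :
    (G.induce (({v} : Finset V) : Set V)).Connected := by
  rw [Finset.coe_singleton]
  exact .of_subsingleton

theorem exists_adj_notMem_mem (hG : G.Preconnected) {T : Set V} (hT : T.Nonempty)
    (hT' : T ≠ Set.univ) : ∃ l ∉ T, ∃ p ∈ T, G.Adj l p := by
  obtain ⟨r, hr⟩ := hT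
  obtain ⟨v, hv⟩ := (Set.ne_univ_iff_exists_notMem T).1 hT'
  obtain ⟨w⟩ := hG r v
  obtain ⟨d, -, hp, hl⟩ := w.exists_boundary_dart T hr hv
  exact ⟨d.snd, hl, d.fst, hp, d.adj.symm⟩

theorem connected_finset_induction [Finite V] [DecidableEq V] {P : Finset V → Prop}
    (step : ∀ T : Finset V, (G.induce (T : Set V)).Connected →
      (∀ l ∉ T, ∀ p ∈ T, G.Adj l p → P (insert l T)) → P T)
    (T : Finset V) (hT : (G.induce (T : Set V)).Connected) : P T := by
  induction T using WellFoundedGT.induction with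
  | ind T ih =>
    refine step T hT fun l hl p hp hlp => ih _ (Finset.ssubset_insert hl) ?_
    rw [Finset.coe_insert]
    exact connected_induce_insert hT.preconnected hp hlp

variable [Fintype V] [DecidableEq V] [DecidableRel G.Adj] {T : Finset V}

theorem neighborFinset_sdiff_insert (hG : G.IsAcyclic)
    (hT : (G.induce (T : Set V)).Preconnected) (hl : l ∉ T) (hp : p ∈ T) (hlp : G.Adj l p) :
    G.neighborFinset l \ insert l T = (G.neighborFinset l).erase p := by
  ext c
  simp only [Finset.mem_sdiff, SimpleGraph.mem_neighborFinset, Finset.mem_insert,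
    Finset.mem_erase, not_or]
  constructor
  · rintro ⟨hc, -, hcT⟩
    exact ⟨(ne_of_mem_of_not_mem hp hcT).symm, hc⟩
  · rintro ⟨hcp, hc⟩
    exact ⟨hc, hc.ne', fun hcT =>
      hcp (eq_of_adj_of_preconnected_induce hG hT hl hp hcT hlp hc)⟩

theorem edgeFinset_inter_sym2_insert (hG : G.IsAcyclic)
    (hT : (G.induce (T : Set V)).Preconnected) (hl : l ∉ T) (hp : p ∈ T) (hlp : G.Adj l p) :
    G.edgeFinset ∩ (insert l T).sym2 = insert s(l, p) (G.edgeFinset ∩ T.sym2) := by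
  have unique : ∀ q ∈ T, G.Adj l q → q = p := fun q hq hlq =>
    eq_of_adj_of_preconnected_induce hG hT hl hp hq hlp hlq
  ext e
  induction e with | h a b
  simp only [Finset.mem_inter, SimpleGraph.mem_edgeFinset, SimpleGraph.mem_edgeSet,
    Finset.mk_mem_sym2_iff, Finset.mem_insert, Sym2.eq_iff]
  grind [G.adj_comm, G.irrefl]

theorem prod_neighborFinset_sdiff {M : Type*} [CommMonoid M] (hG : G.IsAcyclic)
    (hT : (G.induce (T : Set V)).Preconnected) (hl : l ∉ T) (hp : p ∈ T) (hlp : G.Adj l p)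
    (f : V → V → M) :
    ∏ v ∈ T, ∏ c ∈ G.neighborFinset v \ T, f c v =
      f l p * ∏ v ∈ T, ∏ c ∈ G.neighborFinset v \ insert l T, f c v := by
  have split : ∀ v ∈ T, ∏ c ∈ G.neighborFinset v \ T, f c v =
      (if v = p then f l p else 1) * ∏ c ∈ G.neighborFinset v \ insert l T, f c v := by
    intro v hv
    rw [Finset.sdiff_insert]
    split_ifs with h
    · subst h
      exact (Finset.mul_prod_erase _ (f · v) (by simp [hl, hlp.symm])).symm
    · rw [one_mul, Finset.erase_eq_of_notMem]
      simp only [Finset.mem_sdiff, SimpleGraph.mem_neighborFinset, not_and]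
      exact fun hvl => absurd (eq_of_adj_of_preconnected_induce hG hT hl hp hv hlp hvl.symm) h
  rw [Finset.prod_congr rfl split, Finset.prod_mul_distrib, Finset.prod_ite_eq' T p, if_pos hp]

end Graph

theorem lmarginal_mul_left {ι : Type*} [DecidableEq ι] {X : ι → Type*}
    [∀ i, MeasurableSpace (X i)] (μ : ∀ i, Measure (X i)) {s : Finset ι}
    {f g : (∀ i, X i) → ℝ≥0∞} (hf : DependsOn f (s : Set ι)ᶜ) (hg : Measurable g)
    (x : ∀ i, X i) :
    lmarginal μ s (fun y => f y * g y) x = f x * lmarginal μ s g x := by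
  have hfx : ∀ y : ∀ i : s, X i, f (Function.updateFinset x s y) = f x := fun y =>
    hf fun i hi => dif_neg hi
  simp only [lmarginal, hfx]
  exact lintegral_const_mul _ (hg.comp measurable_updateFinset)

theorem lintegral_pi_eq_lintegral_lmarginal_compl_singleton {ι : Type*} [Fintype ι] [DecidableEq ι]
    {X : ι → Type*} [∀ i, MeasurableSpace (X i)] (μ : ∀ i, Measure (X i)) [∀ i, SigmaFinite (μ i)]
    {f : (∀ i, X i) → ℝ≥0∞} (hf : Measurable f) (x : ∀ i, X i) (i : ι) :
    ∫⁻ y, f y ∂Measure.pi μ = ∫⁻ t, lmarginal μ {i}ᶜ f (Function.update x i t) ∂μ i := by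
  rw [lintegral_eq_lmarginal_univ x, ← Finset.insert_compl_self i,
    lmarginal_insert f hf (by simp)]

/-- The potentials of a pairwise Markov random field: a weight on each vertex variable and a
symmetric weight on each pair of variables. Only the pairs that are edges of the graph enter
`PairwiseWeights.density`. -/
structure PairwiseWeights {V : Type*} (X : V → Type*) [∀ v, MeasurableSpace (X v)] where
  vertex : ∀ v, X v → ℝ≥0∞
  edge : ∀ v w, X v × X w → ℝ≥0∞
  edge_swap : ∀ v w z, edge w v z.swap = edge v w z
  measurable_vertex : ∀ v, Measurable (vertex v)
  measurable_edge : ∀ v w, Measurable (edge v w)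

namespace PairwiseWeights

variable {V : Type*} {X : V → Type*} [∀ v, MeasurableSpace (X v)] (W : PairwiseWeights X)

/-- The weight that an assignment gives to an unordered pair of vertices. -/
def pairWeight (x : ∀ v, X v) : Sym2 V → ℝ≥0∞ :=
  Sym2.lift ⟨fun v w => W.edge v w (x v, x w), fun v w => (W.edge_swap v w (x v, x w)).symm⟩

theorem measurable_pairWeight (e : Sym2 V) : Measurable (W.pairWeight · e) := by
  induction e with | h v w
  exact (W.measurable_edge v w).comp ((measurable_pi_apply v).prodMk (measurable_pi_apply w))

theorem pairWeight_update_of_notMem [DecidableEq V] {l : V} {e : Sym2 V} (hl : l ∉ e)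
    (x : ∀ v, X v) (s : X l) : W.pairWeight (Function.update x l s) e = W.pairWeight x e := by
  induction e with | h v w
  simp only [Sym2.mem_iff, not_or] at hl
  simp only [pairWeight, Sym2.lift_mk, Function.update_of_ne (Ne.symm hl.1),
    Function.update_of_ne (Ne.symm hl.2)]

variable [Fintype V] [DecidableEq V] (G : SimpleGraph V) [DecidableRel G.Adj]

/-- The unnormalized density of the random field restricted to the vertex set `T`: the product of
the weights of the vertices in `T` and of the edges of `G` with both ends in `T`. -/
def density (T : Finset V) (x : ∀ v, X v) : ℝ≥0∞ :=
  (∏ v ∈ T, W.vertex v (x v)) * ∏ e ∈ G.edgeFinset ∩ T.sym2, W.pairWeight x e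

/-- The sum-product equations: `m i j` is the message from `i` to `j`. -/
def IsMessageFamily (μ : ∀ v, Measure (X v)) (m : V → ∀ j, X j → ℝ≥0∞) : Prop :=
  ∀ i j, G.Adj i j → ∀ t, m i j t =
    ∫⁻ s, W.edge i j (s, t) * W.vertex i s * ∏ c ∈ (G.neighborFinset i).erase j, m c i s ∂μ i

/-- The density on `T` times the messages crossing into `T`; for a subtree `T` this is the density
of the whole field with the variables outside `T` integrated out. -/
def cutDensity (m : V → ∀ j, X j → ℝ≥0∞) (T : Finset V) (x : ∀ v, X v) : ℝ≥0∞ :=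
  W.density G T x * ∏ v ∈ T, ∏ c ∈ G.neighborFinset v \ T, m c v (x v)

variable {G} {μ : ∀ v, Measure (X v)} {m : V → ∀ j, X j → ℝ≥0∞} {T : Finset V} {l p : V}

theorem measurable_density (T : Finset V) : Measurable (W.density G T) :=
  (Finset.measurable_fun_prod _ fun v _ =>
    (W.measurable_vertex v).comp (measurable_pi_apply v)).mul
    (Finset.measurable_fun_prod _ fun e _ => W.measurable_pairWeight e)

theorem density_insert_update (hG : G.IsAcyclic)
    (hT : (G.induce (T : Set V)).Preconnected) (hl : l ∉ T) (hp : p ∈ T) (hlp : G.Adj l p)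
    (x : ∀ v, X v) (s : X l) :
    W.density G (insert l T) (Function.update x l s) =
      W.edge l p (s, x p) * W.vertex l s * W.density G T x := by
  have notMem_edge : ∀ e ∈ T.sym2, l ∉ e := fun e he hle => hl (Finset.mem_sym2_iff.1 he l hle)
  have vertices : ∏ v ∈ insert l T, W.vertex v (Function.update x l s v) =
      W.vertex l s * ∏ v ∈ T, W.vertex v (x v) := by
    rw [Finset.prod_insert hl, Function.update_self]
    congr 1
    exact Finset.prod_congr rfl fun v hv => by
      rw [Function.update_of_ne (ne_of_mem_of_not_mem hv hl)]
  have edges : ∏ e ∈ G.edgeFinset ∩ (insert l T).sym2,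
      W.pairWeight (Function.update x l s) e =
        W.edge l p (s, x p) * ∏ e ∈ G.edgeFinset ∩ T.sym2, W.pairWeight x e := by
    rw [edgeFinset_inter_sym2_insert hG hT hl hp hlp, Finset.prod_insert fun h =>
      notMem_edge _ (Finset.mem_inter.1 h).2 (Sym2.mem_mk_left l p)]
    congr 1
    · simp only [pairWeight, Sym2.lift_mk, Function.update_self, Function.update_of_ne hlp.ne']
    · exact Finset.prod_congr rfl fun e he =>
        W.pairWeight_update_of_notMem (notMem_edge e (Finset.mem_inter.1 he).2) x s
  rw [density, density, vertices, edges]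
  ring

theorem cutDensity_insert_update (hG : G.IsAcyclic)
    (hT : (G.induce (T : Set V)).Preconnected) (hl : l ∉ T) (hp : p ∈ T) (hlp : G.Adj l p)
    (x : ∀ v, X v) (s : X l) :
    W.cutDensity G m (insert l T) (Function.update x l s) =
      (W.edge l p (s, x p) * W.vertex l s * ∏ c ∈ (G.neighborFinset l).erase p, m c l s) *
        (W.density G T x * ∏ v ∈ T, ∏ c ∈ G.neighborFinset v \ insert l T, m c v (x v)) := by
  have messages : ∏ v ∈ T, ∏ c ∈ G.neighborFinset v \ insert l T,
      m c v (Function.update x l s v) =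
        ∏ v ∈ T, ∏ c ∈ G.neighborFinset v \ insert l T, m c v (x v) :=
    Finset.prod_congr rfl fun v hv => by
      rw [Function.update_of_ne (ne_of_mem_of_not_mem hv hl)]
  rw [cutDensity, W.density_insert_update hG hT hl hp hlp, Finset.prod_insert hl,
    neighborFinset_sdiff_insert hG hT hl hp hlp, Function.update_self, messages]
  ring

namespace IsMessageFamily

variable {W}

theorem measurable [∀ v, SigmaFinite (μ v)] (hm : W.IsMessageFamily G μ m) (hG : G.IsAcyclic)
    (hlp : G.Adj l p) : Measurable (m l p) := by
  suffices h : ∀ T : Finset V, (G.induce (T : Set V)).Connected →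
      ∀ l ∉ T, ∀ p ∈ T, G.Adj l p → Measurable (m l p) by
    exact h {p} (connected_induce_singleton p) l (by simpa using hlp.ne) p
      (Finset.mem_singleton_self p) hlp
  refine connected_finset_induction fun T hT ih l hl p hp hlp => ?_
  have incoming : ∀ c ∈ (G.neighborFinset l).erase p, Measurable (m c l) := by
    intro c hc
    rw [← neighborFinset_sdiff_insert hG hT.preconnected hl hp hlp, Finset.mem_sdiff,
      SimpleGraph.mem_neighborFinset] at hc
    exact ih l hl p hp hlp c hc.2 l (Finset.mem_insert_self l T) hc.1.symm
  rw [funext (hm l p hlp)]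
  refine Measurable.lintegral_prod_left' (f := fun z : X l × X p => W.edge l p z *
    W.vertex l z.1 * ∏ c ∈ (G.neighborFinset l).erase p, m c l z.1) ?_
  exact ((W.measurable_edge l p).mul ((W.measurable_vertex l).comp measurable_fst)).mul
    (Finset.measurable_fun_prod _ fun c hc => (incoming c hc).comp measurable_fst)

theorem lintegral_cutDensity_insert [∀ v, SigmaFinite (μ v)] (hm : W.IsMessageFamily G μ m)
    (hG : G.IsAcyclic) (hT : (G.induce (T : Set V)).Preconnected) (hl : l ∉ T) (hp : p ∈ T)
    (hlp : G.Adj l p) (x : ∀ v, X v) :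
    ∫⁻ s, W.cutDensity G m (insert l T) (Function.update x l s) ∂μ l =
      W.cutDensity G m T x := by
  have measurable_integrand : Measurable fun s => W.edge l p (s, x p) * W.vertex l s *
      ∏ c ∈ (G.neighborFinset l).erase p, m c l s :=
    (((W.measurable_edge l p).comp measurable_prodMk_right).mul (W.measurable_vertex l)).mul <|
      Finset.measurable_fun_prod _ fun c hc => hm.measurable hG
        ((G.mem_neighborFinset l c).1 (Finset.mem_of_mem_erase hc)).symm
  simp only [W.cutDensity_insert_update hG hT hl hp hlp]
  rw [lintegral_mul_const _ measurable_integrand, ← hm l p hlp, cutDensity,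
    prod_neighborFinset_sdiff hG hT hl hp hlp (fun c v => m c v (x v)), mul_left_comm]

theorem lmarginal_compl_density [∀ v, SigmaFinite (μ v)] (hm : W.IsMessageFamily G μ m)
    (hG : G.IsTree) (hT : (G.induce (T : Set V)).Connected) :
    lmarginal μ Tᶜ (W.density G Finset.univ) = W.cutDensity G m T := by
  refine connected_finset_induction
    (P := fun T => lmarginal μ Tᶜ (W.density G Finset.univ) = W.cutDensity G m T)
    (fun T hT ih => ?_) T hT
  by_cases hTuniv : T = Finset.univ
  · subst hTuniv
    ext x
    simp [cutDensity, Finset.sdiff_eq_empty_iff_subset.2 (Finset.subset_univ _)]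
  obtain ⟨l, hl, p, hp, hlp⟩ := exists_adj_notMem_mem hG.connected.preconnected
    (Set.nonempty_coe_sort.1 hT.nonempty) (by simpa using hTuniv)
  rw [Finset.mem_coe] at hl hp
  have compl_eq : Tᶜ = insert l (insert l T)ᶜ := by
    rw [Finset.compl_insert, Finset.insert_erase (Finset.mem_compl.2 hl)]
  ext x
  rw [compl_eq, lmarginal_insert _ (W.measurable_density _) (by simp), ih l hl p hp hlp]
  exact hm.lintegral_cutDensity_insert hG.isAcyclic hT.preconnected hl hp hlp x

theorem lmarginal_compl_singleton_density [∀ v, SigmaFinite (μ v)]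
    (hm : W.IsMessageFamily G μ m) (hG : G.IsTree) (i : V) (x : ∀ v, X v) :
    lmarginal μ {i}ᶜ (W.density G Finset.univ) x =
      W.vertex i (x i) * ∏ c ∈ G.neighborFinset i, m c i (x i) := by
  have no_edges : G.edgeFinset ∩ ({i} : Finset V).sym2 = ∅ := by
    simp [Finset.sym2_singleton]
  rw [hm.lmarginal_compl_density hG (connected_induce_singleton i), cutDensity, density, no_edges,
    Finset.prod_empty, mul_one, Finset.prod_singleton, Finset.prod_singleton,
    Finset.sdiff_singleton_eq_erase, Finset.erase_eq_of_notMem (by simp)]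

end IsMessageFamily

/-- The hard-constraint field: each weight is the indicator of the set of allowed values. -/
def ofConstraints (D : ∀ v, Set (X v)) (hD : ∀ v, MeasurableSet (D v))
    (C : ∀ v w, Set (X v × X w)) (hC : ∀ v w, MeasurableSet (C v w))
    (hsymm : ∀ v w z, z ∈ C v w ↔ z.swap ∈ C w v) : PairwiseWeights X where
  vertex v := (D v).indicator 1
  edge v w := (C v w).indicator 1
  edge_swap v w z := Set.indicator_eq_indicator (hsymm v w z).symm rfl
  measurable_vertex v := measurable_one.indicator (hD v)
  measurable_edge v w := measurable_one.indicator (hC v w)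

theorem density_univ_ofConstraints (D : ∀ v, Set (X v)) (hD : ∀ v, MeasurableSet (D v))
    (C : ∀ v w, Set (X v × X w)) (hC : ∀ v w, MeasurableSet (C v w))
    (hsymm : ∀ v w z, z ∈ C v w ↔ z.swap ∈ C w v) :
    (ofConstraints D hD C hC hsymm).density G Finset.univ =
      {x | (∀ v, x v ∈ D v) ∧ ∀ v w, G.Adj v w → (x v, x w) ∈ C v w}.indicator 1 := by
  ext x
  by_cases hx : (∀ v, x v ∈ D v) ∧ ∀ v w, G.Adj v w → (x v, x w) ∈ C v w
  · rw [Set.indicator_of_mem (by exact hx), density, Finset.prod_eq_one, Finset.prod_eq_one,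
      mul_one, Pi.one_apply]
    · intro e he
      induction e with | h v w
      exact Set.indicator_of_mem (hx.2 v w (by simpa using he)) 1
    · exact fun v _ => Set.indicator_of_mem (hx.1 v) 1
  · rw [Set.indicator_of_notMem (by exact hx), density, mul_eq_zero]
    simp only [not_and_or, not_forall] at hx
    obtain ⟨v, hv⟩ | ⟨v, w, hvw, hC⟩ := hx
    · exact .inl (Finset.prod_eq_zero (Finset.mem_univ v) (Set.indicator_of_notMem hv 1))
    · exact .inr (Finset.prod_eq_zero (i := s(v, w)) (by simpa using hvw)
        (Set.indicator_of_notMem hC 1))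

end PairwiseWeights

theorem univariate_query_message_passing_general {V : Type*} [Fintype V] [DecidableEq V]
    {G : SimpleGraph V} [DecidableRel G.Adj] (hG : G.IsTree)
    {X : V → Type*} [∀ v, MeasurableSpace (X v)] [∀ v, Nonempty (X v)]
    {μ : ∀ v, Measure (X v)} [∀ v, SigmaFinite (μ v)]
    {W : PairwiseWeights X} {m : V → ∀ j, X j → ℝ≥0∞} (hm : W.IsMessageFamily G μ m)
    (i : V) {f : X i → ℝ≥0∞} (hf : Measurable f) :
    ∫⁻ x, f (x i) * W.density G Finset.univ x ∂Measure.pi μ =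
      ∫⁻ t, f t * W.vertex i t * ∏ c ∈ G.neighborFinset i, m c i t ∂μ i := by
  have hdepends : DependsOn (fun x : ∀ v, X v => f (x i)) (({i}ᶜ : Finset V) : Set V)ᶜ :=
    fun x y hxy => congrArg f (hxy i (by simp))
  have hmeas : Measurable fun x => f (x i) * W.density G Finset.univ x :=
    (hf.comp (measurable_pi_apply i)).mul (W.measurable_density _)
  rw [lintegral_pi_eq_lintegral_lmarginal_compl_singleton μ hmeas
    (fun v => Classical.arbitrary (X v)) i]
  refine lintegral_congr fun t => ?_
  rw [lmarginal_mul_left μ hdepends (W.measurable_density _),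
    hm.lmarginal_compl_singleton_density hG, Function.update_self, mul_assoc]

theorem volume_mpModel_inter {V : Type*} [Fintype V] [DecidableEq V] (G : SimpleGraph V)
    [DecidableRel G.Adj] {D : V → Set ℝ} (hD : ∀ i, MeasurableSet (D i))
    {Dij : V → V → Set (ℝ × ℝ)} (hDij : ∀ i j, MeasurableSet (Dij i j))
    (hsym : ∀ i j, ∀ p : ℝ × ℝ, p ∈ Dij i j ↔ p.swap ∈ Dij j i)
    (i : V) {Q : Set ℝ} (hQ : MeasurableSet Q) :
    volume (mpModel G D Dij ∩ {x : V → ℝ | x i ∈ Q}) =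
      ∫⁻ x : V → ℝ, Q.indicator 1 (x i) *
        (PairwiseWeights.ofConstraints D hD Dij hDij hsym).density G Finset.univ x := by
  have density_eq : (PairwiseWeights.ofConstraints D hD Dij hDij hsym).density G Finset.univ =
      (mpModel G D Dij).indicator 1 :=
    PairwiseWeights.density_univ_ofConstraints D hD Dij hDij hsym
  have hmodel : MeasurableSet (mpModel G D Dij) := by
    rw [← measurable_indicator_const_iff (1 : ℝ≥0∞)]
    exact density_eq ▸ PairwiseWeights.measurable_density _ _
  have hquery : MeasurableSet {x : V → ℝ | x i ∈ Q} := measurable_pi_apply i hQ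
  rw [density_eq, ← lintegral_indicator_one (hmodel.inter hquery)]
  refine lintegral_congr fun x => ?_
  rw [Set.inter_comm, Set.inter_indicator_one]
  rfl

/-- Proposition 5, univariate queries via message passing: for every vertex
`i` and every Lebesgue-measurable `Q ⊆ ℝ`, the Lebesgue volume of
`Δ ∩ {x : x_i ∈ Q}` equals `∫ 1[t ∈ Q] · 1[t ∈ D_i] · b_i(t) dt`. -/
theorem univariate_query_message_passing {V : Type*} [Fintype V] [DecidableEq V]
    (G : SimpleGraph V) [DecidableRel G.Adj] (hG : G.IsTree)
    (D : V → Set ℝ) (hD : ∀ i, MeasurableSet (D i))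
    (Dij : V → V → Set (ℝ × ℝ)) (hDij : ∀ i j, MeasurableSet (Dij i j))
    (hsym : ∀ i j, ∀ p : ℝ × ℝ, p ∈ Dij i j ↔ p.swap ∈ Dij j i)
    (m : V → V → ℝ → ℝ≥0∞)
    (hm : ∀ i j, G.Adj i j → ∀ t : ℝ,
      m i j t = ∫⁻ x : ℝ,
        (Dij i j).indicator (1 : ℝ × ℝ → ℝ≥0∞) (x, t) *
          (D i).indicator (1 : ℝ → ℝ≥0∞) x *
          ∏ c ∈ (G.neighborFinset i).erase j, m c i x)
    (i : V) (Q : Set ℝ) (hQ : MeasurableSet Q) :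
    volume (mpModel G D Dij ∩ {x : V → ℝ | x i ∈ Q})
      = ∫⁻ t : ℝ,
          Q.indicator (1 : ℝ → ℝ≥0∞) t * (D i).indicator (1 : ℝ → ℝ≥0∞) t *
            ∏ c ∈ G.neighborFinset i, m c i t := by
  rw [volume_mpModel_inter G hD hDij hsym i hQ]
  exact univariate_query_message_passing_general (μ := fun _ => volume)
    (W := .ofConstraints D hD Dij hDij hsym) hG hm i (measurable_one.indicator hQ)
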